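/- For the structure A = ({1_0,2_0,3_0,1_1,2_1,3_1}; R, S) with R(a_i,b_j) ↔ (i = j ∧ a ≠ b) and S(a_i,b_j) ↔ i ≠ j, define the unary operation α(a_i) := a_{1−i} and the ternary operation s(a_i, b_j, c_k) := c_k if i = j and a_i if i ≠ j. Then α and s are polymorphisms of A and they satisfy the identity s(x,x,y) = s(y,α(y),x) for all x, y ∈ A (both sides equal y). -/

import Mathlib

/-- R(a_i, b_j) holds iff i = j and a ≠ b: two disjoint copies of K₃. -/
def Rrel (x y : Fin 3 × Fin 2) : Prop := x.2 = y.2 ∧ x.1 ≠ y.1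

/-- S(a_i, b_j) holds iff i ≠ j. -/
def Srel (x y : Fin 3 × Fin 2) : Prop := x.2 ≠ y.2

/-- α(a_i) = a_{1-i}. -/
def alphaOp (x : Fin 3 × Fin 2) : Fin 3 × Fin 2 := (x.1, 1 - x.2)

/-- s(a_i, b_j, c_k) = c_k if i = j, and a_i if i ≠ j. -/
def sOp (x y z : Fin 3 × Fin 2) : Fin 3 × Fin 2 := if x.2 = y.2 then z else x

/-- α and s are polymorphisms of A = (A; R, S) and satisfy the non-trivial identity
s(x,x,y) ≈ s(y,α(y),x), both sides being equal to y. -/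
theorem stmt_16 :
    (∀ x y, Rrel x y → Rrel (alphaOp x) (alphaOp y)) ∧
    (∀ x y, Srel x y → Srel (alphaOp x) (alphaOp y)) ∧
    (∀ x₁ x₂ x₃ y₁ y₂ y₃, Rrel x₁ y₁ → Rrel x₂ y₂ → Rrel x₃ y₃ →
      Rrel (sOp x₁ x₂ x₃) (sOp y₁ y₂ y₃)) ∧
    (∀ x₁ x₂ x₃ y₁ y₂ y₃, Srel x₁ y₁ → Srel x₂ y₂ → Srel x₃ y₃ →
      Srel (sOp x₁ x₂ x₃) (sOp y₁ y₂ y₃)) ∧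
    (∀ x y, sOp x x y = y ∧ sOp y (alphaOp y) x = y) := by
  have flip_injective : ∀ i j : Fin 2, i ≠ j → 1 - i ≠ 1 - j := by decide
  have eq_iff_of_ne : ∀ i j k l : Fin 2, i ≠ k → j ≠ l → (i = j ↔ k = l) := by decide
  have ne_flip : ∀ i : Fin 2, i ≠ 1 - i := by decide
  refine ⟨?_, ?_, ?_, ?_, ?_⟩
  · rintro x y ⟨h, hne⟩
    exact ⟨congrArg (1 - ·) h, hne⟩
  · intro x y h
    exact flip_injective _ _ h
  · intro x₁ x₂ x₃ y₁ y₂ y₃ h₁ h₂ h₃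
    unfold sOp
    rw [h₁.1, h₂.1]
    split_ifs
    exacts [h₃, h₁]
  · intro x₁ x₂ x₃ y₁ y₂ y₃ h₁ h₂ h₃
    unfold sOp
    simp only [eq_iff_of_ne _ _ _ _ h₁ h₂]
    split_ifs
    exacts [h₃, h₁]
  · intro x y
    exact ⟨if_pos rfl, if_neg (ne_flip y.2)⟩
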